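/- Let K be a sextic CM field (a number field of degree 6 over ℚ, totally complex, containing a totally real subfield K₊ with [K₊:ℚ] = 3) containing no imaginary quadratic subfield (no subfield L with [L:ℚ] = 2). Let 𝓞 be an order in K, and let φ₁, φ₂, φ₃ : K → ℂ be embeddings that are pairwise non-conjugate (one representative from each conjugate pair of the six embeddings of K). Then for every real number R > (3/(4π))^{1/3}·|Δ(𝓞)|^{1/6}, there exists a nonzero γ ∈ 𝓞 such that K = ℚ(γ), |Re(φᵢ(γ))| < 1 for i = 1, 2, 3, and Im(φ₁(γ))² + Im(φ₂(γ))² + Im(φ₃(γ))² < R². -/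

import Mathlib

open Module

/-!
Let `K` be a CM field of degree `2p` with `p` prime. Minkowski's theorem, applied to the image of
the order in `ℝ^p × ℝ^p` and to the product of the cube `(-1, 1)^p` (real parts) with the
Euclidean ball of radius `R` (imaginary parts), gives a nonzero `γ` in the order. If `ℚ(γ)` had
odd degree, it would have a real embedding; since complex conjugation on a CM field commutes with
every embedding, all conjugates of `γ` would then be real, hence of absolute value `< 1`, which is
impossible for a nonzero algebraic integer. So the degree of `ℚ(γ)` is an even divisor of `2p`,
that is `2` or `2p`, and `2` is excluded when `K` has no quadratic subfield.
-/

open MeasureTheory NumberField ComplexEmbedding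
open scoped ComplexConjugate

section CMType

variable {K ι : Type*} [Field K]

/-- A CM type of `K`, indexed by `ι`: a family of complex embeddings which together with their
conjugates lists every embedding of `K` exactly once (so `K` has no real embedding). -/
def IsCMType (φ : ι → K →+* ℂ) : Prop :=
  Function.Bijective (Sum.elim φ fun i => conjugate (φ i))

/-- The map `K → ℝ^(ι ⊕ ι)` recording the real parts (left summand) and the imaginary parts (right
summand) of the conjugates under `φ`. -/
noncomputable def reIm [CharZero K] (φ : ι → K →+* ℂ) : K →ₗ[ℚ] (ι ⊕ ι → ℝ) :=
  AddMonoidHom.toRatLinearMap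
    { toFun x := Sum.elim (fun i => (φ i x).re) fun i => (φ i x).im
      map_zero' := by ext (i | i) <;> simp
      map_add' x y := by ext (i | i) <;> simp }

@[simp]
theorem reIm_inl [CharZero K] (φ : ι → K →+* ℂ) (x : K) (i : ι) :
    reIm φ x (Sum.inl i) = (φ i x).re := rfl

@[simp]
theorem reIm_inr [CharZero K] (φ : ι → K →+* ℂ) (x : K) (i : ι) :
    reIm φ x (Sum.inr i) = (φ i x).im := rfl

theorem IsCMType.forall_embedding {P : ℂ → Prop} {x : K} {φ : ι → K →+* ℂ} (hφ : IsCMType φ)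
    (hP : ∀ z, P z → P (conj z)) (h : ∀ i, P (φ i x)) (ψ : K →+* ℂ) : P (ψ x) := by
  obtain ⟨i | i, rfl⟩ := hφ.2 ψ
  · exact h i
  · exact hP _ (h i)

variable [NumberField K] [Fintype ι] {φ : ι → K →+* ℂ}

theorem isCMType_of_pairwise [IsTotallyComplex K] (hcard : finrank ℚ K = 2 * Fintype.card ι)
    (hφ : Pairwise fun i j => φ i ≠ φ j ∧ φ i ≠ conjugate (φ j)) : IsCMType φ := by
  classical
  have hinj : Function.Injective φ := fun i j h => by
    by_contra hij
    exact (hφ hij).1 h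
  have hne (i j : ι) : φ i ≠ conjugate (φ j) := by
    rcases eq_or_ne i j with rfl | hij
    · exact fun h => IsTotallyComplex.complexEmbedding_not_isReal (φ i) (isReal_iff.2 h.symm)
    · exact (hφ hij).2
  refine (Fintype.bijective_iff_injective_and_card _).2
    ⟨hinj.sumElim (star_injective.comp hinj) hne, ?_⟩
  rw [Embeddings.card K ℂ, hcard, Fintype.card_sum, two_mul]

namespace IsCMType

theorem finrank_eq (hφ : IsCMType φ) : finrank ℚ K = 2 * Fintype.card ι := by
  rw [← Embeddings.card K ℂ, ← Fintype.card_of_bijective hφ, Fintype.card_sum, two_mul]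

theorem discr_eq [DecidableEq ι] (hφ : IsCMType φ) (b : ι ⊕ ι → K) :
    (Algebra.discr ℚ b : ℝ) =
      (-4) ^ Fintype.card ι * (Matrix.of fun j => reIm φ (b j)).det ^ 2 := by
  set A : Matrix (ι ⊕ ι) (ι ⊕ ι) ℝ := Matrix.of fun j => reIm φ (b j)
  let e : ι ⊕ ι ≃ (K →ₐ[ℚ] ℂ) := (Equiv.ofBijective _ hφ).trans (RingHom.equivRatAlgHom K ℂ)
  -- `P` turns the columns `(re, im)` into the columns `(re + I im, re - I im)`.
  let P : Matrix (ι ⊕ ι) (ι ⊕ ι) ℂ := Matrix.fromBlocks 1 1 (Complex.I • 1) (-Complex.I • 1)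
  have hP : P.det ^ 2 = (-4) ^ Fintype.card ι := by
    rw [Matrix.det_fromBlocks_one₁₁, mul_one, ← sub_smul, Matrix.det_smul, Matrix.det_one, mul_one,
      ← pow_mul, mul_comm, pow_mul]
    congr 1
    linear_combination 4 * Complex.I_sq
  have he_inl (i : ι) (x : K) : e (Sum.inl i) x = φ i x := rfl
  have he_inr (i : ι) (x : K) : e (Sum.inr i) x = conj (φ i x) := rfl
  have hAP : Algebra.embeddingsMatrixReindex ℚ ℂ b e = A.map Complex.ofRealHom * P := by
    ext j (i | i)
    · simp [Algebra.embeddingsMatrixReindex, Algebra.embeddingsMatrix, Matrix.mul_apply, P, A,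
        he_inl, Matrix.one_apply]
    · simp [Algebra.embeddingsMatrixReindex, Algebra.embeddingsMatrix, Matrix.mul_apply, P, A,
        he_inr, Matrix.one_apply, Complex.ext_iff]
  have hdet : (A.map Complex.ofRealHom).det = (A.det : ℂ) := (Complex.ofRealHom.map_det A).symm
  have h := Algebra.discr_eq_det_embeddingsMatrixReindex_pow_two ℚ ℂ b e
  rw [hAP, Matrix.det_mul, hdet, mul_pow, hP, mul_comm, eq_ratCast] at h
  exact_mod_cast h

theorem sqrt_abs_discr [DecidableEq ι] (hφ : IsCMType φ) (b : ι ⊕ ι → K) :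
    √|(Algebra.discr ℚ b : ℝ)| =
      2 ^ Fintype.card ι * |(Matrix.of fun j => reIm φ (b j)).det| := by
  have h4 : (4 : ℝ) ^ Fintype.card ι = (2 ^ Fintype.card ι) ^ 2 := by
    rw [← pow_mul, mul_comm, pow_mul]; norm_num
  rw [hφ.discr_eq, abs_mul, abs_pow, abs_neg, abs_pow, Nat.abs_ofNat, h4, ← mul_pow,
    Real.sqrt_sq (by positivity)]

theorem det_reIm_ne_zero [DecidableEq ι] (hφ : IsCMType φ) (b : Basis (ι ⊕ ι) ℚ K) :
    (Matrix.of fun j => reIm φ (b j)).det ≠ 0 := by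
  intro h
  have hdiscr := hφ.discr_eq b
  rw [h, zero_pow two_ne_zero, mul_zero, Rat.cast_eq_zero] at hdiscr
  exact Algebra.discr_not_zero_of_basis ℚ b hdiscr

/-- The image under `reIm φ` of a basis of `K` over `ℚ`, as a basis of `ℝ^(ι ⊕ ι)`; its `ℤ`-span is
the lattice to which Minkowski's theorem is applied. -/
noncomputable def reImBasis (hφ : IsCMType φ) (b : Basis (ι ⊕ ι) ℚ K) :
    Basis (ι ⊕ ι) ℝ (ι ⊕ ι → ℝ) :=
  haveI := b.index_nonempty
  basisOfLinearIndependentOfCardEqFinrank (b := fun j => reIm φ (b j))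
    (by classical exact Matrix.linearIndependent_rows_of_det_ne_zero (hφ.det_reIm_ne_zero b))
    (by simp)

@[simp]
theorem coe_reImBasis (hφ : IsCMType φ) (b : Basis (ι ⊕ ι) ℚ K) :
    ⇑(hφ.reImBasis b) = fun j => reIm φ (b j) :=
  haveI := b.index_nonempty
  coe_basisOfLinearIndependentOfCardEqFinrank _ _

theorem span_range_reImBasis (hφ : IsCMType φ) (b : Basis (ι ⊕ ι) ℚ K) :
    Submodule.span ℤ (Set.range (hφ.reImBasis b)) =
      (Submodule.span ℤ (Set.range b)).map ((reIm φ).restrictScalars ℤ) := by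
  rw [Submodule.map_span, ← Set.range_comp, coe_reImBasis]
  rfl

theorem volume_fundamentalDomain_reImBasis [DecidableEq ι] (hφ : IsCMType φ)
    (b : Basis (ι ⊕ ι) ℚ K) :
    2 ^ Fintype.card ι * volume (ZSpan.fundamentalDomain (hφ.reImBasis b)) =
      ENNReal.ofReal √|(Algebra.discr ℚ b : ℝ)| := by
  rw [ZSpan.volume_fundamentalDomain, coe_reImBasis, hφ.sqrt_abs_discr,
    ENNReal.ofReal_mul (by positivity), ENNReal.ofReal_pow zero_le_two, ENNReal.ofReal_ofNat]

theorem exists_ne_zero_mem_span {κ : Type*} [Fintype κ] [DecidableEq κ] (hφ : IsCMType φ)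
    (b : Basis κ ℚ K) {s : Set (ι ⊕ ι → ℝ)} (hsymm : ∀ x ∈ s, -x ∈ s) (hconv : Convex ℝ s)
    (hvol : 2 ^ Fintype.card ι * ENNReal.ofReal √|(Algebra.discr ℚ b : ℝ)| < volume s) :
    ∃ γ ∈ Submodule.span ℤ (Set.range b), γ ≠ 0 ∧ reIm φ γ ∈ s := by
  classical
  have hcard : Fintype.card κ = Fintype.card (ι ⊕ ι) := by
    rw [← finrank_eq_card_basis b, hφ.finrank_eq, Fintype.card_sum, two_mul]
  let B : Basis (ι ⊕ ι) ℚ K := b.reindex (Fintype.equivOfCardEq hcard)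
  let V : Basis (ι ⊕ ι) ℝ (ι ⊕ ι → ℝ) := hφ.reImBasis B
  have hspan : Submodule.span ℤ (Set.range B) = Submodule.span ℤ (Set.range b) := by
    rw [b.range_reindex]
  have hdiscr : Algebra.discr ℚ B = Algebra.discr ℚ b := by
    rw [Basis.coe_reindex, Algebra.discr_reindex]
  have hcovol : volume (ZSpan.fundamentalDomain V) * 2 ^ finrank ℝ (ι ⊕ ι → ℝ) < volume s := by
    rwa [finrank_pi, Fintype.card_sum, pow_add, mul_comm, mul_assoc,
      hφ.volume_fundamentalDomain_reImBasis, hdiscr]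
  have : Countable (Submodule.span ℤ (Set.range V)).toAddSubgroup :=
    inferInstanceAs (Countable (Submodule.span ℤ (Set.range V)))
  obtain ⟨⟨x, hx⟩, hx0, hxs⟩ := exists_ne_zero_mem_lattice_of_measure_mul_two_pow_lt_measure
    (ZSpan.isAddFundamentalDomain' V volume) hsymm hconv hcovol
  obtain ⟨γ, hγ, rfl⟩ : x ∈ (Submodule.span ℤ (Set.range b)).map _ :=
    hspan ▸ hφ.span_range_reImBasis B ▸ hx
  refine ⟨γ, hγ, ?_, hxs⟩
  rintro rfl
  exact hx0 (Subtype.ext (map_zero _))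

end IsCMType

end CMType

section CubeBall

variable {ι κ : Type*} [Fintype ι] [Fintype κ]

/-- The product of the cube `(-1, 1)^ι` and the open Euclidean ball of radius `R` in `ℝ^κ`, as a
subset of `ℝ^(ι ⊕ κ)`: the convex body to which Minkowski's theorem is applied. -/
def cubeBall (ι κ : Type*) [Fintype ι] [Fintype κ] (R : ℝ) : Set (ι ⊕ κ → ℝ) :=
  {x | x ∘ Sum.inl ∈ Metric.ball 0 1 ∧
    WithLp.toLp 2 (x ∘ Sum.inr) ∈ Metric.ball (0 : EuclideanSpace ℝ κ) R}

theorem abs_lt_one_of_mem_cubeBall {R : ℝ} {x : ι ⊕ κ → ℝ} (hx : x ∈ cubeBall ι κ R) (i : ι) :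
    |x (Sum.inl i)| < 1 :=
  (pi_norm_lt_iff one_pos).1 (mem_ball_zero_iff.1 hx.1) i

theorem sum_sq_lt_of_mem_cubeBall {R : ℝ} {x : ι ⊕ κ → ℝ} (hx : x ∈ cubeBall ι κ R) :
    ∑ j, x (Sum.inr j) ^ 2 < R ^ 2 := by
  have h := pow_lt_pow_left₀ (mem_ball_zero_iff.1 hx.2) (norm_nonneg _) two_ne_zero
  simpa [EuclideanSpace.real_norm_sq_eq] using h

theorem neg_mem_cubeBall {R : ℝ} {x : ι ⊕ κ → ℝ} (hx : x ∈ cubeBall ι κ R) :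
    -x ∈ cubeBall ι κ R := by
  simp only [cubeBall, mem_ball_zero_iff, Set.mem_ofPred_eq] at hx ⊢
  exact ⟨(norm_neg _).trans_lt hx.1, (norm_neg _).trans_lt hx.2⟩

theorem convex_cubeBall (R : ℝ) : Convex ℝ (cubeBall ι κ R) := by
  let pr₁ : (ι ⊕ κ → ℝ) →ₗ[ℝ] (ι → ℝ) := LinearMap.funLeft ℝ ℝ Sum.inl
  let pr₂ : (ι ⊕ κ → ℝ) →ₗ[ℝ] EuclideanSpace ℝ κ :=
    (WithLp.linearEquiv 2 ℝ (κ → ℝ)).symm.toLinearMap ∘ₗ LinearMap.funLeft ℝ ℝ Sum.inr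
  exact ((convex_ball _ _).linear_preimage pr₁).inter ((convex_ball _ _).linear_preimage pr₂)

theorem volume_cubeBall (R : ℝ) :
    volume (cubeBall ι κ R) =
      2 ^ Fintype.card ι * volume (Metric.ball (0 : EuclideanSpace ℝ κ) R) := by
  have hpre : cubeBall ι κ R = MeasurableEquiv.sumPiEquivProdPi (fun _ => ℝ) ⁻¹'
      (Metric.ball 0 1 ×ˢ (WithLp.toLp 2 ⁻¹' Metric.ball (0 : EuclideanSpace ℝ κ) R)) := rfl
  rw [hpre, (volume_measurePreserving_sumPiEquivProdPi _).measure_preimage_equiv,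
    Measure.volume_eq_prod, Measure.prod_prod, (PiLp.volume_preserving_toLp κ).measure_preimage
      Metric.isOpen_ball.measurableSet.nullMeasurableSet, Real.volume_pi_ball _ one_pos, mul_one,
    ENNReal.ofReal_pow zero_le_two, ENNReal.ofReal_ofNat]

end CubeBall

section Generation

variable {K : Type*} [Field K]

theorem isTotallyComplex_of_forall_exists_im_ne_zero
    (hK : ∀ ψ : K →+* ℂ, ∃ x : K, (ψ x).im ≠ 0) : IsTotallyComplex K where
  isComplex v := by
    rw [← InfinitePlace.mk_embedding v, InfinitePlace.isComplex_mk_iff, isReal_iff]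
    intro hreal
    obtain ⟨x, hx⟩ := hK v.embedding
    exact hx (Complex.conj_eq_iff_im.1 (RingHom.congr_fun hreal x))

variable [NumberField K]

theorem eq_zero_of_forall_norm_lt_one {γ : K} (hγ : IsIntegral ℤ γ)
    (hlt : ∀ ψ : K →+* ℂ, ‖ψ γ‖ < 1) : γ = 0 := by
  by_contra hγ0
  have v : InfinitePlace K := Classical.arbitrary _
  have hle : 1 ≤ v γ := InfinitePlace.one_le_of_lt_one (a := ⟨γ, hγ⟩)
    (fun h => hγ0 (congrArg Subtype.val h))
    fun z _ => (InfinitePlace.norm_embedding_eq z γ).symm.trans_lt (hlt _)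
  exact absurd (hlt v.embedding) (by rwa [InfinitePlace.norm_embedding_eq, not_lt])

theorem isTotallyReal_of_forall_im_eq_zero {L : IntermediateField ℚ K}
    (hL : ∀ ψ : K →+* ℂ, ∀ x ∈ L, (ψ x).im = 0) : IsTotallyReal L where
  isReal v := by
    rw [← InfinitePlace.mk_embedding v, InfinitePlace.isReal_mk_iff, isReal_iff]
    ext x
    rw [conjugate_coe_eq, Complex.conj_eq_iff_im, ← lift_algebraMap_apply K v.embedding x]
    exact hL _ x x.2

theorem isCMField_of_finrank_eq_two_mul [IsTotallyComplex K] (L : IntermediateField ℚ K)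
    [IsTotallyReal L] (hL : finrank ℚ K = 2 * finrank ℚ L) : IsCMField K := by
  have : Algebra.IsQuadraticExtension L K := ⟨by
    have hmul := finrank_mul_finrank ℚ L K
    rw [hL, mul_comm] at hmul
    exact Nat.eq_of_mul_eq_mul_right finrank_pos hmul⟩
  exact IsCMField.ofCMExtension L K

variable [IsCMField K]

theorem le_maximalRealSubfield_of_isReal {L : IntermediateField ℚ K} {ψ : L →+* ℂ}
    (hψ : IsReal ψ) : L.toSubfield ≤ maximalRealSubfield K := by
  intro x hx
  rw [← IsCMField.complexConj_eq_self_iff]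
  apply (lift K ψ).injective
  rw [IsCMField.complexEmbedding_complexConj]
  have hlift : lift K ψ x = ψ ⟨x, hx⟩ := lift_algebraMap_apply K ψ ⟨x, hx⟩
  rw [hlift]
  exact RingHom.congr_fun (isReal_iff.1 hψ) ⟨x, hx⟩

theorem le_maximalRealSubfield_of_odd_finrank {L : IntermediateField ℚ K}
    (hL : Odd (finrank ℚ L)) : L.toSubfield ≤ maximalRealSubfield K := by
  classical
  obtain ⟨v, hv⟩ := Fintype.card_pos_iff.1 (InfinitePlace.nrRealPlaces_pos_of_odd_finrank hL)
  exact le_maximalRealSubfield_of_isReal (InfinitePlace.isReal_iff.1 hv)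

theorem not_odd_finrank_adjoin_of_abs_re_lt_one {γ : K} (hγ : IsIntegral ℤ γ) (hγ0 : γ ≠ 0)
    (hre : ∀ ψ : K →+* ℂ, |(ψ γ).re| < 1) : ¬ Odd (finrank ℚ (IntermediateField.adjoin ℚ {γ})) := by
  intro hodd
  have hreal := (mem_maximalRealSubfield_iff γ).1 (le_maximalRealSubfield_of_odd_finrank hodd
    (IntermediateField.mem_adjoin_simple_self ℚ γ))
  refine hγ0 (eq_zero_of_forall_norm_lt_one hγ fun ψ => ?_)
  rw [← Complex.conj_eq_iff_re.1 (hreal ψ), Complex.norm_real]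
  exact hre ψ

theorem adjoin_eq_top_of_abs_re_lt_one {p : ℕ} (hp : p.Prime) (hK : finrank ℚ K = 2 * p)
    (hquad : ¬ ∃ L : IntermediateField ℚ K, finrank ℚ L = 2) {γ : K} (hγ : IsIntegral ℤ γ)
    (hγ0 : γ ≠ 0) (hre : ∀ ψ : K →+* ℂ, |(ψ γ).re| < 1) :
    IntermediateField.adjoin ℚ {γ} = ⊤ := by
  obtain ⟨d, hd⟩ := (Nat.not_odd_iff_even.1
    (not_odd_finrank_adjoin_of_abs_re_lt_one hγ hγ0 hre)).two_dvd
  have hdvd : 2 * d ∣ 2 * p := by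
    rw [← hd, ← hK]
    exact ⟨_, (finrank_mul_finrank ℚ (IntermediateField.adjoin ℚ {γ}) K).symm⟩
  rcases hp.eq_one_or_self_of_dvd d (Nat.dvd_of_mul_dvd_mul_left two_pos hdvd) with rfl | rfl
  · exact absurd ⟨_, hd⟩ hquad
  · exact IntermediateField.eq_of_le_of_finrank_eq le_top
      (by rw [hd, IntermediateField.finrank_top', hK])

end Generation

theorem linearIndependent_rat_coe {K κ : Type*} [DivisionRing K] [CharZero K] {O : Subring K}
    (b : Basis κ ℤ O) : LinearIndependent ℚ fun i => (b i : K) :=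
  (LinearIndependent.iff_fractionRing ℤ ℚ).1 <|
    b.linearIndependent.map' O.subtype.toAddMonoidHom.toIntLinearMap
      (LinearMap.ker_eq_bot.2 Subtype.val_injective)

theorem isIntegral_of_mem_of_basis {A κ : Type*} [CommRing A] [Finite κ] {O : Subring A}
    (b : Basis κ ℤ O) {x : A} (hx : x ∈ O) : IsIntegral ℤ x := by
  have : Module.Finite ℤ O := .of_basis b
  exact (IsIntegral.of_finite ℤ (⟨x, hx⟩ : O)).map (O.subtype.toIntAlgHom)

theorem ofReal_sqrt_lt_volume_ball_three {D R : ℝ} (hD : 0 ≤ D)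
    (hR : (3 / (4 * Real.pi)) ^ ((1 : ℝ) / 3) * D ^ ((1 : ℝ) / 6) < R) :
    ENNReal.ofReal √D < volume (Metric.ball (0 : EuclideanSpace ℝ (Fin 3)) R) := by
  have hR0 : 0 < R := lt_of_le_of_lt (by positivity) hR
  have hcube : ((3 / (4 * Real.pi)) ^ ((1 : ℝ) / 3) * D ^ ((1 : ℝ) / 6)) ^ 3 =
      3 / (4 * Real.pi) * √D := by
    rw [mul_pow, ← Real.rpow_mul_natCast (by positivity), ← Real.rpow_mul_natCast hD,
      Real.sqrt_eq_rpow]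
    norm_num
  have hlt : 3 / (4 * Real.pi) * √D < R ^ 3 :=
    hcube ▸ pow_lt_pow_left₀ hR (by positivity) three_ne_zero
  rw [EuclideanSpace.volume_ball_fin_three, ← ENNReal.ofReal_pow hR0.le,
    ← ENNReal.ofReal_mul (by positivity), ENNReal.ofReal_lt_ofReal_iff (by positivity)]
  calc √D = 3 / (4 * Real.pi) * √D * (Real.pi * 4 / 3) := by field_simp
    _ < R ^ 3 * (Real.pi * 4 / 3) := by gcongr

theorem stmt_4_general {K ι κ : Type*} [Field K] [NumberField K] [IsCMField K] [Fintype ι]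
    [Fintype κ] [DecidableEq κ] {p : ℕ} (hp : p.Prime) (hK : finrank ℚ K = 2 * p)
    (hquad : ¬ ∃ L : IntermediateField ℚ K, finrank ℚ L = 2) {O : Subring K} (b : Basis κ ℤ O)
    (hκ : Fintype.card κ = finrank ℚ K) {φ : ι → K →+* ℂ} (hφ : IsCMType φ) {R : ℝ}
    (hR : ENNReal.ofReal √|((Algebra.discr ℚ fun i => (b i : K) : ℚ) : ℝ)| <
      volume (Metric.ball (0 : EuclideanSpace ℝ ι) R)) :
    ∃ γ : K, γ ≠ 0 ∧ γ ∈ O ∧ IntermediateField.adjoin ℚ {γ} = ⊤ ∧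
      (∀ i, |(φ i γ).re| < 1) ∧ ∑ i, (φ i γ).im ^ 2 < R ^ 2 := by
  have hb := linearIndependent_rat_coe b
  have : Nonempty κ := Fintype.card_pos_iff.1 (hκ ▸ finrank_pos)
  have hvol : 2 ^ Fintype.card ι *
      ENNReal.ofReal √|(Algebra.discr ℚ (basisOfLinearIndependentOfCardEqFinrank hb hκ) : ℝ)| <
      volume (cubeBall ι ι R) := by
    rw [coe_basisOfLinearIndependentOfCardEqFinrank, volume_cubeBall]
    exact ENNReal.mul_lt_mul_right (by simp) (by finiteness) hR
  obtain ⟨γ, hγ, hγ0, hmem⟩ := hφ.exists_ne_zero_mem_span _ (fun _ => neg_mem_cubeBall)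
    (convex_cubeBall R) hvol
  rw [coe_basisOfLinearIndependentOfCardEqFinrank] at hγ
  have hγO : γ ∈ O :=
    Submodule.span_le (p := O.toAddSubgroup.toIntSubmodule).2
      (Set.range_subset_iff.2 fun i => (b i).2) hγ
  have hre : ∀ i, |(φ i γ).re| < 1 := abs_lt_one_of_mem_cubeBall hmem
  have hre' : ∀ ψ : K →+* ℂ, |(ψ γ).re| < 1 :=
    hφ.forall_embedding (P := fun z => |z.re| < 1) (fun z hz => by rwa [Complex.conj_re]) hre
  exact ⟨γ, hγ0, hγO, adjoin_eq_top_of_abs_re_lt_one hp hK hquad (isIntegral_of_mem_of_basis b hγO)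
    hγ0 hre', hre, sum_sq_lt_of_mem_cubeBall hmem⟩

/-- Minkowski step, Case 1 of the geometry-of-numbers proposition.
Let `K` be a sextic CM field with no imaginary quadratic subfield, `𝓞` an order in `K`,
and `φ₁, φ₂, φ₃ : K → ℂ` pairwise distinct, pairwise non-conjugate embeddings. Then for
every real `R > (3/(4π))^{1/3}·|Δ(𝓞)|^{1/6}` there is a nonzero `γ ∈ 𝓞` generating `K`
with `|Re(φᵢ(γ))| < 1` for all `i` and `∑ᵢ Im(φᵢ(γ))² < R²`. -/
theorem stmt_4
    (K : Type*) [Field K] [NumberField K]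
    (hK6 : finrank ℚ K = 6)
    (hKcomplex : ∀ φ : K →+* ℂ, ∃ x : K, (φ x).im ≠ 0)
    (Kp : IntermediateField ℚ K)
    (hKp3 : finrank ℚ Kp = 3)
    (hKpreal : ∀ φ : K →+* ℂ, ∀ x ∈ Kp, (φ x).im = 0)
    (hnoquad : ¬ ∃ L : IntermediateField ℚ K, finrank ℚ L = 2)
    (O : Subring K)
    (hOint : ∀ x ∈ O, IsIntegral ℤ x)
    (b : Basis (Fin 6) ℤ O)
    (φ : Fin 3 → (K →+* ℂ))
    (hφ : ∀ i j : Fin 3, i ≠ j →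
      φ i ≠ φ j ∧ φ i ≠ (starRingEnd ℂ).comp (φ j)) :
    ∀ R : ℝ,
      (3 / (4 * Real.pi)) ^ ((1 : ℝ)/3) *
          |((Algebra.discr ℚ (fun i => (b i : K)) : ℚ) : ℝ)| ^ ((1 : ℝ)/6) < R →
      ∃ γ : K, γ ≠ 0 ∧ γ ∈ O ∧ IntermediateField.adjoin ℚ {γ} = ⊤ ∧
        (∀ i : Fin 3, |(φ i γ).re| < 1) ∧
        (∑ i : Fin 3, (φ i γ).im ^ 2) < R ^ 2 := by
  have := isTotallyReal_of_forall_im_eq_zero hKpreal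
  have := isTotallyComplex_of_forall_exists_im_ne_zero hKcomplex
  have := isCMField_of_finrank_eq_two_mul Kp (by rw [hK6, hKp3])
  exact fun R hR => stmt_4_general Nat.prime_three hK6 hnoquad b (by simp [hK6])
    (isCMType_of_pairwise (by simp [hK6]) fun i j => hφ i j)
    (ofReal_sqrt_lt_volume_ball_three (abs_nonneg _) hR)
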